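/- Let F be the column of the 14 polynomials in ℚ[a_1,a_2,a_3,a_4,b_1,b_2] listed in the context. There exists a nonzero polynomial Q with rational coefficients in the 84 entries of a 6×14 matrix such that for every complex matrix P ∈ ℂ^{6×14} with Q(P) ≠ 0, the polynomial system P·F(a,b) = 0 (six equations in the six unknowns a_1,a_2,a_3,a_4,b_1,b_2) has exactly 18 solutions in ℂ^6. (This is the count of plane conics through the origin meeting six general lines in ℂ³.) -/

import Mathlib

/-!
The incidence variety of pairs `(P, z)` with `P · F(z) = 0` is an affine space of dimension
`84 = 6 + 78`, because `F₀ = 1` allows solving for the first column of `P`. The theorem says that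
its projection to the space of matrices is generically finite of degree 18. The degree is read off
from one special matrix `P₀`, whose fibre is the spectrum of `ℚ[T]/(T¹⁸ - T¹³)` with `b₁ = T`.

*Upper bound.* No solutions escape to infinity near `P₀`: over the local ring of the space of
matrices at `P₀`, the span of the products `b₁ⁱ b₂ʲ F_l` with `i + j < 5` is stable under
multiplication by `b₁` and `b₂`. Modulo the maximal ideal and lower degree, this is a rewriting
argument with the rows of `P₀` and the syzygies of `F`; Nakayama's lemma lifts it. Hence the
coordinate algebra is finite over the local ring, and by Nakayama again it is spanned by the powers
`b₁ⁱ`, `i < 18`, as is its special fibre. Both facts hold over a neighbourhood of `P₀`. As the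
projection is finite there, between varieties of equal dimension, it is dominant.

*Lower bound.* The minimal polynomial of `b₁` over this neighbourhood is monic, and its
specialization at `P₀` vanishes at `T`, so its degree is at least 18.

Thus over a neighbourhood of `P₀` the coordinate algebra is generated by `b₁`, with a minimal
polynomial of degree 18, which is separable wherever its discriminant does not vanish.
-/

open MvPolynomial

/-- The 14 polynomials in `ℚ[a₁,a₂,a₃,a₄,b₁,b₂]` arising from plane conics in `ℂ³` through the
origin; the variables are `a₁ = X 0, a₂ = X 1, a₃ = X 2, a₄ = X 3, b₁ = X 4, b₂ = X 5`. -/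
noncomputable def conicF : Fin 14 → MvPolynomial (Fin 6) ℚ :=
  ![1, X 0, X 1, X 2, X 3,
    X 2 * X 4, X 2 * X 5, X 3 * X 4, X 3 * X 5,
    X 0 * X 4 - 2 * X 5, X 0 * X 5 - 2 * X 1 * X 4,
    X 4 * (X 3 * X 4 - X 2 * X 5), X 5 * (X 3 * X 4 - X 2 * X 5),
    X 1 * X 4 ^ 2 - X 0 * X 4 * X 5 + X 5 ^ 2]

open scoped Matrix

/-! ### The special matrix -/

/-- The 14 conic polynomials evaluated at a point `z` of an arbitrary commutative ring. -/
def conicEval {A : Type*} [CommRing A] (z : Fin 6 → A) : Fin 14 → A :=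
  ![1, z 0, z 1, z 2, z 3,
    z 2 * z 4, z 2 * z 5, z 3 * z 4, z 3 * z 5,
    z 0 * z 4 - 2 * z 5, z 0 * z 5 - 2 * z 1 * z 4,
    z 4 * (z 3 * z 4 - z 2 * z 5), z 5 * (z 3 * z 4 - z 2 * z 5),
    z 1 * z 4 ^ 2 - z 0 * z 4 * z 5 + z 5 ^ 2]

/-- A matrix `P₀` of linear forms whose fibre `P₀ · F = 0` is `Spec ℚ[T]/(T¹⁸ - T¹³)` with
`b₁ = T`. It is chosen so that the rewriting in `SolvesSpecialMod.degreeLT_six_le` terminates. -/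
def specialMatrix (R : Type*) [Ring R] : Matrix (Fin 6) (Fin 14) R :=
  !![0, 0, 0, 0, 0, 0, 0, 0, 1, 1, 0, 0, 0, 0;
     0, 0, 1, 0, 0, 0, 0, 0, 0, 0, 0, 0, 0, 0;
     0, 0, 0, -1, 0, 0, 0, 0, 0, 0, 1, -1, 0, 0;
     -1, 0, 0, 0, 1, 0, 0, 0, 0, 0, 0, 0, 1, 0;
     0, 1, 0, 0, 0, -1, 0, 0, 0, 0, 0, 0, 0, 0;
     0, 0, 0, 0, 0, 0, 0, 0, 0, 0, 0, 0, 0, 1]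

section ConicEval

variable {A B : Type*} [CommRing A] [CommRing B]

lemma aeval_conicF [Algebra ℚ A] (z : Fin 6 → A) (l : Fin 14) :
    aeval z (conicF l) = conicEval z l := by
  fin_cases l <;> simp [conicF, conicEval]

lemma conicEval_comp (f : A →+* B) (z : Fin 6 → A) : conicEval (f ∘ z) = f ∘ conicEval z := by
  ext l
  fin_cases l <;> simp [conicEval, map_ofNat]

lemma map_mulVec_conicEval (f : A →+* B) (P : Matrix (Fin 6) (Fin 14) A) (z : Fin 6 → A) :
    P.map f *ᵥ conicEval (f ∘ z) = f ∘ (P *ᵥ conicEval z) := by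
  ext k
  rw [conicEval_comp, Function.comp_apply, RingHom.map_mulVec]

lemma map_specialMatrix (f : A →+* B) : (specialMatrix A).map f = specialMatrix B := by
  ext k l
  fin_cases k <;> fin_cases l <;> simp [specialMatrix]

lemma specialMatrix_mulVec (v : Fin 14 → A) :
    specialMatrix A *ᵥ v =
      ![v 9 + v 8, v 2, v 10 - v 3 - v 11, v 12 - v 0 + v 4, v 1 - v 5, v 13] := by
  ext k
  fin_cases k <;> simp [specialMatrix, Matrix.mulVec, dotProduct, Fin.sum_univ_succ] <;> ring

end ConicEval

/-! ### Products of bounded degree -/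

section Filtration

variable {O A ι : Type*} [CommRing O] [CommRing A] [Algebra O A]

/-- The `O`-span of the products `xⁱ yʲ F_l` with `i + j < d`; the number `i + j` is called the
degree of such a product. -/
def degreeLT (O : Type*) [CommRing O] [Algebra O A] (x y : A) (F : ι → A) (d : ℕ) :
    Submodule O A :=
  Submodule.span O {w | ∃ i j l, i + j < d ∧ w = x ^ i * y ^ j * F l}

/-- The elements congruent to one of degree `< d` modulo `I` times the elements of degree `≤ d`.
When `I` is contained in the Jacobson radical, they can be ignored in degree `d` by Nakayama's
lemma. -/
def negligible (I : Ideal O) (x y : A) (F : ι → A) (d : ℕ) : Submodule O A :=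
  degreeLT O x y F d ⊔ I • degreeLT O x y F (d + 1)

/-- The elements that become negligible in degree `n` after multiplication by any monomial of
degree `e` in `x` and `y`. -/
def negligibleAfter (I : Ideal O) (x y : A) (F : ι → A) (e n : ℕ) : Submodule O A where
  carrier := {w | ∀ i j, i + j = e → x ^ i * y ^ j * w ∈ negligible I x y F n}
  add_mem' hv hw i j h := by
    rw [mul_add]
    exact add_mem (hv i j h) (hw i j h)
  zero_mem' i j _ := by
    rw [mul_zero]
    exact zero_mem _
  smul_mem' r w hw i j h := by
    rw [mul_smul_comm]
    exact Submodule.smul_mem _ r (hw i j h)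

variable {I : Ideal O} {x y : A} {F : ι → A} {c w : A} {a b d e n : ℕ}

lemma degreeLT_mono (h : d ≤ e) : degreeLT O x y F d ≤ degreeLT O x y F e :=
  Submodule.span_mono fun _ ⟨i, j, l, hij, hw⟩ => ⟨i, j, l, hij.trans_le h, hw⟩

lemma fg_degreeLT [Finite ι] : (degreeLT O x y F d).FG := by
  refine Submodule.fg_span ((Set.finite_range fun t : Fin d × Fin d × ι =>
    x ^ (t.1 : ℕ) * y ^ (t.2.1 : ℕ) * F t.2.2).subset ?_)
  rintro w ⟨i, j, l, hij, rfl⟩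
  exact ⟨(⟨i, by omega⟩, ⟨j, by omega⟩, l), rfl⟩

lemma mem_degreeLT_one (l : ι) : F l ∈ degreeLT O x y F 1 :=
  Submodule.subset_span ⟨0, 0, l, by simp, by simp⟩

lemma map_mulLeft_degreeLT_le (hc : c = x ∨ c = y) :
    (degreeLT O x y F d).map (LinearMap.mulLeft O c) ≤ degreeLT O x y F (d + 1) := by
  rw [degreeLT, Submodule.map_span_le]
  rintro _ ⟨i, j, l, hij, rfl⟩
  rw [LinearMap.mulLeft_apply]
  rcases hc with rfl | rfl
  · exact Submodule.subset_span ⟨i + 1, j, l, by omega, by ring⟩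
  · exact Submodule.subset_span ⟨i, j + 1, l, by omega, by ring⟩

lemma mul_mem_negligible (hc : c = x ∨ c = y) (hw : w ∈ negligible I x y F d) :
    c * w ∈ negligible I x y F (d + 1) := by
  suffices (negligible I x y F d).map (LinearMap.mulLeft O c) ≤ negligible I x y F (d + 1) from
    this ⟨w, hw, rfl⟩
  rw [negligible, Submodule.map_sup, Submodule.map_smul'']
  exact sup_le_sup (map_mulLeft_degreeLT_le hc)
    (Submodule.smul_mono le_rfl (map_mulLeft_degreeLT_le hc))

lemma pow_mul_mem_negligible (hc : c = x ∨ c = y) (hw : w ∈ negligible I x y F d) (e : ℕ) :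
    c ^ e * w ∈ negligible I x y F (d + e) := by
  induction e with
  | zero => simpa using hw
  | succ e ih => simpa only [pow_succ', mul_assoc, add_assoc] using mul_mem_negligible hc ih

lemma mem_negligibleAfter_of_mem_negligible (hw : w ∈ negligible I x y F d) (h : d + e = n) :
    w ∈ negligibleAfter I x y F e n := by
  rintro i j rfl
  rw [mul_assoc, ← h, add_comm i, ← add_assoc]
  exact pow_mul_mem_negligible (.inl rfl) (pow_mul_mem_negligible (.inr rfl) hw j) i

lemma mem_negligibleAfter_succ (hx : x * w ∈ negligibleAfter I x y F e n)
    (hy : y * w ∈ negligibleAfter I x y F e n) : w ∈ negligibleAfter I x y F (e + 1) n := by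
  rintro (_ | i) j hij
  · obtain rfl : j = e + 1 := by omega
    exact Set.mem_of_eq_of_mem (by ring) (hy 0 e (zero_add e))
  · exact Set.mem_of_eq_of_mem (by ring) (hx i j (by omega))

lemma mul_mem_negligibleAfter (hc : c = x ∨ c = y)
    (hw : w ∈ negligibleAfter I x y F (e + 1) n) : c * w ∈ negligibleAfter I x y F e n := by
  intro i j hij
  rcases hc with rfl | rfl
  · exact Set.mem_of_eq_of_mem (by ring) (hw (i + 1) j (by omega))
  · exact Set.mem_of_eq_of_mem (by ring) (hw i (j + 1) (by omega))

lemma mem_negligibleAfter_of_pow_mul (hx : x ^ a * w ∈ negligible I x y F a)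
    (hy : y ^ b * w ∈ negligible I x y F b) (hab : a + b ≤ e + 1) :
    w ∈ negligibleAfter I x y F e e := by
  intro i j hij
  rcases (by omega : a ≤ i ∨ b ≤ j) with h | h
  · obtain ⟨i, rfl⟩ := Nat.exists_eq_add_of_le h
    exact Set.mem_of_eq_of_mem (by ring)
      (mem_negligibleAfter_of_mem_negligible hx (by omega : a + (i + j) = e) i j rfl)
  · obtain ⟨j, rfl⟩ := Nat.exists_eq_add_of_le h
    exact Set.mem_of_eq_of_mem (by ring)
      (mem_negligibleAfter_of_mem_negligible hy (by omega : b + (i + j) = e) i j rfl)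

lemma degreeLT_succ_le [Finite ι] (hI : I ≤ (⊥ : Ideal O).jacobson)
    (h : ∀ l, F l ∈ negligibleAfter I x y F n n) :
    degreeLT O x y F (n + 1) ≤ degreeLT O x y F n := by
  refine Submodule.le_of_le_smul_of_le_jacobson_bot fg_degreeLT hI (Submodule.span_le.2 ?_)
  rintro w ⟨i, j, l, hij, rfl⟩
  rcases Nat.lt_succ_iff_lt_or_eq.1 hij with hlt | heq
  · exact Submodule.mem_sup_left (Submodule.subset_span ⟨i, j, l, hlt, rfl⟩)
  · exact h l i j heq

lemma mul_mem_degreeLT_of_mem_adjoin (h : degreeLT O x y F (n + 1) ≤ degreeLT O x y F n)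
    {t w : A} (ht : t ∈ Algebra.adjoin O {x, y}) (hw : w ∈ degreeLT O x y F n) :
    t * w ∈ degreeLT O x y F n := by
  induction ht using Algebra.adjoin_induction generalizing w with
  | mem c hc => exact h (map_mulLeft_degreeLT_le hc ⟨w, hw, rfl⟩)
  | algebraMap r =>
    rw [← Algebra.smul_def]
    exact Submodule.smul_mem _ r hw
  | add s t _ _ hs ht =>
    rw [add_mul]
    exact add_mem (hs hw) (ht hw)
  | mul s t _ _ hs ht =>
    rw [mul_assoc]
    exact hs (ht hw)

lemma restrictScalars_span_adjoin_eq_degreeLT (hn : 0 < n)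
    (h : degreeLT O x y F (n + 1) ≤ degreeLT O x y F n) :
    (Submodule.span (Algebra.adjoin O {x, y}) (Set.range F)).restrictScalars O =
      degreeLT O x y F n := by
  refine le_antisymm (fun w hw => ?_) (Submodule.span_le.2 ?_)
  · induction hw using Submodule.span_induction with
    | mem w hw =>
      obtain ⟨l, rfl⟩ := hw
      exact degreeLT_mono hn (mem_degreeLT_one l)
    | zero => exact zero_mem _
    | add v w _ _ hv hw => exact add_mem hv hw
    | smul t w _ hw => exact mul_mem_degreeLT_of_mem_adjoin h t.2 hw
  · rintro _ ⟨i, j, l, -, rfl⟩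
    have hx : x ∈ Algebra.adjoin O {x, y} := Algebra.subset_adjoin (.inl rfl)
    have hy : y ∈ Algebra.adjoin O {x, y} := Algebra.subset_adjoin (.inr rfl)
    exact Submodule.smul_mem _
      (⟨_, mul_mem (pow_mem hx i) (pow_mem hy j)⟩ : Algebra.adjoin O {x, y})
      (Submodule.subset_span ⟨l, rfl⟩)

end Filtration

/-! ### Rewriting near the special matrix -/

section SpecialFibre

variable {O A : Type*} [CommRing O] [CommRing A] [Algebra O A]

/-- `z` solves the system `P₀ · F = 0` modulo the ideal `I`. -/
def SolvesSpecialMod (I : Ideal O) (z : Fin 6 → A) : Prop :=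
  ∀ k, (specialMatrix A *ᵥ conicEval z) k ∈ I • degreeLT O (z 4) (z 5) (conicEval z) 1

namespace SolvesSpecialMod

variable {I : Ideal O} {z : Fin 6 → A}

local notation "b₁" => z 4
local notation "b₂" => z 5
local notation "F" => conicEval z
local notation "𝒩" => negligible I b₁ b₂ F
local notation "𝒜" => negligibleAfter I b₁ b₂ F

lemma b₁_mul_mem {w : A} {d : ℕ} (hw : w ∈ 𝒩 d) : b₁ * w ∈ 𝒩 (d + 1) :=
  mul_mem_negligible (.inl rfl) hw

lemma b₂_mul_mem {w : A} {d : ℕ} (hw : w ∈ 𝒩 d) : b₂ * w ∈ 𝒩 (d + 1) :=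
  mul_mem_negligible (.inr rfl) hw

lemma conicEval_mem (l : Fin 14) : F l ∈ 𝒩 1 :=
  Submodule.mem_sup_left (mem_degreeLT_one l)

lemma row_mem (hz : SolvesSpecialMod I z) (k : Fin 6) : (specialMatrix A *ᵥ F) k ∈ 𝒩 0 :=
  Submodule.mem_sup_right (hz k)

lemma b₁_mul_F₅_sub_mem (hz : SolvesSpecialMod I z) : b₁ * F 5 - 2 * (b₂ * F 0) ∈ 𝒩 1 := by
  refine Set.mem_of_eq_of_mem ?_ (sub_mem (conicEval_mem 9) (b₁_mul_mem (hz.row_mem 4)))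
  simp only [specialMatrix_mulVec, conicEval, Matrix.cons_val]
  ring

lemma b₂_mul_F₅_mem (hz : SolvesSpecialMod I z) : b₂ * F 5 ∈ 𝒩 1 := by
  have hb₁ := b₁_mul_mem (hz.row_mem 1)
  refine Set.mem_of_eq_of_mem ?_
    (sub_mem (add_mem (conicEval_mem 10) (add_mem hb₁ hb₁)) (b₂_mul_mem (hz.row_mem 4)))
  simp only [specialMatrix_mulVec, conicEval, Matrix.cons_val]
  ring

lemma b₁_mul_F₆_mem (hz : SolvesSpecialMod I z) : b₁ * F 6 ∈ 𝒩 1 := by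
  refine Set.mem_of_eq_of_mem ?_ hz.b₂_mul_F₅_mem
  simp only [conicEval, Matrix.cons_val]
  ring

lemma b₂_mul_F₆_sub_mem : b₂ * F 6 - b₁ * F 8 ∈ 𝒩 1 := by
  refine Set.mem_of_eq_of_mem ?_ (neg_mem (conicEval_mem 12))
  simp only [conicEval, Matrix.cons_val]
  ring

lemma b₁_mul_F₇_mem (hz : SolvesSpecialMod I z) : b₁ * F 7 ∈ 𝒩 1 := by
  refine Set.mem_of_eq_of_mem ?_ (add_mem (conicEval_mem 11) hz.b₁_mul_F₆_mem)
  simp only [conicEval, Matrix.cons_val]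
  ring

lemma b₁_mul_F₁₁_sub_mem (hz : SolvesSpecialMod I z) : b₁ * F 11 - b₂ * F 8 ∈ 𝒩 1 := by
  refine Set.mem_of_eq_of_mem ?_
    (neg_mem (add_mem (add_mem (b₂_mul_mem (hz.row_mem 0)) (b₁_mul_mem (hz.row_mem 2)))
      (add_mem (conicEval_mem 5) (add_mem (conicEval_mem 13) (conicEval_mem 13)))))
  simp only [specialMatrix_mulVec, conicEval, Matrix.cons_val]
  ring

lemma b₂_mul_F₁₁_sub_mem (hz : SolvesSpecialMod I z) : b₂ * F 11 - b₁ * F 0 ∈ 𝒩 1 := by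
  refine Set.mem_of_eq_of_mem ?_ (sub_mem (b₁_mul_mem (hz.row_mem 3)) (conicEval_mem 7))
  simp only [specialMatrix_mulVec, conicEval, Matrix.cons_val]
  ring

lemma b₂_sq_mul_F₀_mem (hz : SolvesSpecialMod I z) (h2 : IsUnit (2 : O)) :
    b₂ ^ 2 * F 0 ∈ 𝒩 2 := by
  refine (Submodule.smul_mem_iff_of_isUnit _ h2).1 (Set.mem_of_eq_of_mem ?_
    (sub_mem (b₁_mul_mem hz.b₂_mul_F₅_mem) (b₂_mul_mem hz.b₁_mul_F₅_sub_mem)))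
  rw [ofNat_smul_eq_nsmul, nsmul_eq_mul, Nat.cast_ofNat]
  ring

lemma b₁_sq_mul_F₈_mem (hz : SolvesSpecialMod I z) : b₁ ^ 2 * F 8 ∈ 𝒩 2 :=
  Set.mem_of_eq_of_mem (by ring)
    (sub_mem (b₂_mul_mem hz.b₁_mul_F₆_mem) (b₁_mul_mem b₂_mul_F₆_sub_mem))

lemma b₁_sq_mul_F₀_sub_mem (hz : SolvesSpecialMod I z) :
    b₁ ^ 2 * F 0 - b₂ ^ 2 * F 8 ∈ 𝒩 2 :=
  Set.mem_of_eq_of_mem (by ring)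
    (sub_mem (b₂_mul_mem hz.b₁_mul_F₁₁_sub_mem) (b₁_mul_mem hz.b₂_mul_F₁₁_sub_mem))

lemma b₁_pow_four_mul_F₀_mem (hz : SolvesSpecialMod I z) : b₁ ^ 4 * F 0 ∈ 𝒩 4 :=
  Set.mem_of_eq_of_mem (by ring)
    (add_mem (b₁_mul_mem (b₁_mul_mem hz.b₁_sq_mul_F₀_sub_mem))
      (b₂_mul_mem (b₂_mul_mem hz.b₁_sq_mul_F₈_mem)))

lemma b₂_pow_four_mul_F₈_mem (hz : SolvesSpecialMod I z) (h2 : IsUnit (2 : O)) :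
    b₂ ^ 4 * F 8 ∈ 𝒩 4 :=
  Set.mem_of_eq_of_mem (by ring)
    (sub_mem (b₁_mul_mem (b₁_mul_mem (hz.b₂_sq_mul_F₀_mem h2)))
      (b₂_mul_mem (b₂_mul_mem hz.b₁_sq_mul_F₀_sub_mem)))

lemma mem_negligibleAfter {w : A} (hw : w ∈ 𝒩 1) : w ∈ 𝒜 4 5 :=
  mem_negligibleAfter_of_mem_negligible hw rfl

lemma F₀_mem_negligibleAfter (hz : SolvesSpecialMod I z) (h2 : IsUnit (2 : O)) : F 0 ∈ 𝒜 5 5 :=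
  mem_negligibleAfter_of_pow_mul hz.b₁_pow_four_mul_F₀_mem (hz.b₂_sq_mul_F₀_mem h2) le_rfl

lemma F₈_mem_negligibleAfter (hz : SolvesSpecialMod I z) (h2 : IsUnit (2 : O)) : F 8 ∈ 𝒜 5 5 :=
  mem_negligibleAfter_of_pow_mul hz.b₁_sq_mul_F₈_mem (hz.b₂_pow_four_mul_F₈_mem h2) le_rfl

lemma F₃_mem_negligibleAfter : F 3 ∈ 𝒜 5 5 := by
  refine mem_negligibleAfter_succ (mem_negligibleAfter ?_) (mem_negligibleAfter ?_)
  · exact Set.mem_of_eq_of_mem (mul_comm _ _) (conicEval_mem 5)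
  · exact Set.mem_of_eq_of_mem (mul_comm _ _) (conicEval_mem 6)

lemma F₄_mem_negligibleAfter : F 4 ∈ 𝒜 5 5 := by
  refine mem_negligibleAfter_succ (mem_negligibleAfter ?_) (mem_negligibleAfter ?_)
  · exact Set.mem_of_eq_of_mem (mul_comm _ _) (conicEval_mem 7)
  · exact Set.mem_of_eq_of_mem (mul_comm _ _) (conicEval_mem 8)

lemma F₅_mem_negligibleAfter (hz : SolvesSpecialMod I z) (h2 : IsUnit (2 : O)) :
    F 5 ∈ 𝒜 5 5 := by
  have hF₀ : b₂ * F 0 ∈ 𝒜 4 5 :=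
    mul_mem_negligibleAfter (.inr rfl) (hz.F₀_mem_negligibleAfter h2)
  refine mem_negligibleAfter_succ ?_ (mem_negligibleAfter hz.b₂_mul_F₅_mem)
  exact Set.mem_of_eq_of_mem (by ring)
    (add_mem (mem_negligibleAfter hz.b₁_mul_F₅_sub_mem) (add_mem hF₀ hF₀))

lemma F₆_mem_negligibleAfter (hz : SolvesSpecialMod I z) (h2 : IsUnit (2 : O)) :
    F 6 ∈ 𝒜 5 5 := by
  refine mem_negligibleAfter_succ (mem_negligibleAfter hz.b₁_mul_F₆_mem) ?_
  exact (Submodule.sub_mem_iff_left _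
    (mul_mem_negligibleAfter (.inl rfl) (hz.F₈_mem_negligibleAfter h2))).1
    (mem_negligibleAfter b₂_mul_F₆_sub_mem)

lemma F₇_mem_negligibleAfter (hz : SolvesSpecialMod I z) (h2 : IsUnit (2 : O)) :
    F 7 ∈ 𝒜 5 5 := by
  have hF₇ : b₂ * F 7 = b₁ * F 8 := by
    simp only [conicEval, Matrix.cons_val]
    ring
  refine mem_negligibleAfter_succ (mem_negligibleAfter hz.b₁_mul_F₇_mem) ?_
  rw [hF₇]
  exact mul_mem_negligibleAfter (.inl rfl) (hz.F₈_mem_negligibleAfter h2)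

lemma F₁₁_mem_negligibleAfter (hz : SolvesSpecialMod I z) (h2 : IsUnit (2 : O)) :
    F 11 ∈ 𝒜 5 5 := by
  refine mem_negligibleAfter_succ
    ((Submodule.sub_mem_iff_left _ ?_).1 (mem_negligibleAfter hz.b₁_mul_F₁₁_sub_mem))
    ((Submodule.sub_mem_iff_left _ ?_).1 (mem_negligibleAfter hz.b₂_mul_F₁₁_sub_mem))
  · exact mul_mem_negligibleAfter (.inr rfl) (hz.F₈_mem_negligibleAfter h2)
  · exact mul_mem_negligibleAfter (.inl rfl) (hz.F₀_mem_negligibleAfter h2)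

lemma conicEval_mem_negligibleAfter (hz : SolvesSpecialMod I z) (h2 : IsUnit (2 : O))
    (l : Fin 14) : F l ∈ 𝒜 5 5 := by
  have hF₀ := hz.F₀_mem_negligibleAfter h2
  have hF₃ : F 3 ∈ 𝒜 5 5 := F₃_mem_negligibleAfter
  have hF₄ : F 4 ∈ 𝒜 5 5 := F₄_mem_negligibleAfter
  have hF₅ := hz.F₅_mem_negligibleAfter h2
  have hF₈ := hz.F₈_mem_negligibleAfter h2
  have hF₁₁ := hz.F₁₁_mem_negligibleAfter h2
  have row (k : Fin 6) : ![F 9 + F 8, F 2, F 10 - F 3 - F 11, F 12 - F 0 + F 4, F 1 - F 5, F 13] k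
      ∈ 𝒜 5 5 :=
    specialMatrix_mulVec F ▸ mem_negligibleAfter_of_mem_negligible (hz.row_mem k) rfl
  have hF₁ : F 1 ∈ 𝒜 5 5 := (Submodule.sub_mem_iff_left _ hF₅).1 (row 4)
  have hF₉ : F 9 ∈ 𝒜 5 5 := (add_mem_cancel_right hF₈).1 (row 0)
  have hF₁₀ : F 10 ∈ 𝒜 5 5 :=
    (Submodule.sub_mem_iff_left _ hF₃).1 ((Submodule.sub_mem_iff_left _ hF₁₁).1 (row 2))
  have hF₁₂ : F 12 ∈ 𝒜 5 5 :=
    (Submodule.sub_mem_iff_left _ hF₀).1 ((add_mem_cancel_right hF₄).1 (row 3))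
  fin_cases l
  exacts [hF₀, hF₁, row 1, hF₃, hF₄, hF₅, hz.F₆_mem_negligibleAfter h2,
    hz.F₇_mem_negligibleAfter h2, hF₈, hF₉, hF₁₀, hF₁₁, hF₁₂, row 5]

lemma degreeLT_six_le (hz : SolvesSpecialMod I z) (h2 : IsUnit (2 : O))
    (hI : I ≤ (⊥ : Ideal O).jacobson) : degreeLT O b₁ b₂ F 6 ≤ degreeLT O b₁ b₂ F 5 :=
  degreeLT_succ_le hI (hz.conicEval_mem_negligibleAfter h2)

end SolvesSpecialMod

end SpecialFibre

/-! ### The special fibre -/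

/-- The Gröbner-type elimination showing that the system `P₀ · F = 0`, read linearly in
`1, a₁, a₂, a₃, a₄` over the ring generated by `b₁` and `b₂`, expresses these elements by `1`. -/
lemma mem_span_singleton_of_rows {T Q : Type*} [CommRing T] [AddCommGroup Q] [Module T Q]
    {x y : T} {e a b u v : Q} (h₀ : x • a - (2 * y) • e + y • v = 0) (h₁ : b = 0)
    (h₂ : y • a - (2 * x) • b - u - (x ^ 2 • v - (x * y) • u) = 0)
    (h₃ : (x * y) • v - y ^ 2 • u - e + v = 0) (h₄ : a - x • u = 0)
    (h₅ : x ^ 2 • b - (x * y) • a + y ^ 2 • e = 0) :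
    a ∈ Submodule.span T {e} ∧ u ∈ Submodule.span T {e} ∧ v ∈ Submodule.span T {e} := by
  obtain rfl := h₁
  obtain rfl := sub_eq_zero.1 h₄
  have he : y ^ 2 • e = (x ^ 2 * y) • u := by linear_combination (norm := module) h₅
  have hv : v = (1 - 2 * (x * y)) • e + (x ^ 3 + y ^ 2) • u := by
    linear_combination (norm := module) h₃ - x • h₀
  have hxu : (x ^ 2 + y ^ 3) • u = (y + x * y ^ 2) • e := by
    linear_combination (norm := module) h₀ - y • hv + x • he
  have hxxu : x ^ 4 • u = (x ^ 2 * y + x ^ 3 * y ^ 2 - y ^ 4) • e := by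
    linear_combination (norm := module) x ^ 2 • hxu + y ^ 2 • he
  have hu₁ : (1 - 2 * (x * y)) • u =
      -(x ^ 2 - x ^ 3 * y + x ^ 4 * y ^ 2 - x * y ^ 4 + y ^ 3) • e := by
    linear_combination (norm := module) y • he - h₂ - x ^ 2 • hv - x • hxxu
  have hu₂ : x • u =
      (2 * y ^ 2 - x ^ 3 + x ^ 4 * y - x ^ 5 * y ^ 2 + x ^ 2 * y ^ 4 - x * y ^ 3) • e := by
    linear_combination (norm := module) x • hu₁ - (2 : T) • he
  have hu : u ∈ Submodule.span T {e} := by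
    refine Submodule.mem_span_singleton.2 ⟨-(x ^ 2 + x ^ 3 * y - 3 * y ^ 3 - x ^ 4 * y ^ 2
      + x * y ^ 4 + 2 * x ^ 5 * y ^ 3 - 2 * x ^ 2 * y ^ 5), ?_⟩
    linear_combination (norm := module) -hu₁ - (2 * y) • hu₂
  refine ⟨Submodule.smul_mem _ _ hu, hu, ?_⟩
  rw [hv]
  exact add_mem (Submodule.smul_mem _ _ (Submodule.mem_span_singleton_self e))
    (Submodule.smul_mem _ _ hu)

section SpecialSolution

variable {C : Type*} [CommRing C]

lemma eq_and_pow_eq_of_relations {x y : C} (h₁ : y * (1 - 2 * (x * y) ^ 2) + x ^ 4 = 0)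
    (h₂ : y ^ 2 * (x * y) = y ^ 2 * (x * y) ^ 2) :
    y = -x ^ 4 + 2 * x ^ 14 ∧ x ^ 18 = x ^ 13 := by
  have hxy : x * y ^ 3 = x ^ 2 * y ^ 4 := by linear_combination h₂
  obtain ⟨w, hw⟩ : ∃ w, w = x * y := ⟨_, rfl⟩
  rw [← hw] at h₁ h₂
  have hw34 : w ^ 3 = w ^ 4 := by
    rw [hw]
    linear_combination x ^ 2 * hxy
  have hw1 : w = -x ^ 5 + 2 * w ^ 3 := by linear_combination x * h₁ + (1 - 2 * w ^ 2) * hw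
  have hw3x : w ^ 3 * x ^ 5 = w ^ 3 := by
    linear_combination w ^ 3 * hw1 - (2 * w ^ 2 + 2 * w + 1) * hw34
  have hw2 : w ^ 2 = x ^ 10 := by
    linear_combination (w - x ^ 5 + 2 * w ^ 3) * hw1 - 4 * hw3x - 4 * (w ^ 2 + w + 1) * hw34
  have hw3 : w ^ 3 = x ^ 15 := by
    linear_combination x ^ 5 * hw2 - w ^ 2 * hw1 + 2 * (w + 1) * hw34
  have hyw : y * w ^ 2 = y * w ^ 3 := by
    linear_combination x * h₂ + (y * w - y * w ^ 2) * hw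
  have hyw2 : y * w ^ 2 = x ^ 14 := by
    linear_combination x ^ 4 * hw2 - w ^ 2 * h₁ + 2 * (w + 1) * hyw
  have hy : y = -x ^ 4 + 2 * x ^ 14 := by linear_combination h₁ + 2 * hyw2
  have hx : x ^ 20 = x ^ 15 := by linear_combination -(w ^ 2 + x ^ 10) * hw2 - hw34 + hw3
  refine ⟨hy, ?_⟩
  rw [hy] at hxy
  -- The coefficient is the quotient in the division of `hxy` by `x ^ 20 - x ^ 15`.
  linear_combination hxy + (-8 * (x ^ 8 + x ^ 3) + 24 * (x ^ 18 + x ^ 13 + x ^ 8 + x ^ 3)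
    - 32 * (x ^ 28 + x ^ 23 + x ^ 18 + x ^ 13 + x ^ 8 + x ^ 3)
    + 16 * (x ^ 38 + x ^ 33 + x ^ 28 + x ^ 23 + x ^ 18 + x ^ 13 + x ^ 8 + x ^ 3)
    - 6 * x ^ 3 + 12 * (x ^ 13 + x ^ 8 + x ^ 3)
    - 8 * (x ^ 23 + x ^ 18 + x ^ 13 + x ^ 8 + x ^ 3)) * hx

lemma eq_and_pow_eq_of_specialMatrix_mulVec_eq_zero {z : Fin 6 → C}
    (h : specialMatrix C *ᵥ conicEval z = 0) :
    z 5 = -z 4 ^ 4 + 2 * z 4 ^ 14 ∧ z 4 ^ 18 = z 4 ^ 13 := by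
  rw [specialMatrix_mulVec] at h
  have h0 : z 0 * z 4 - 2 * z 5 + z 3 * z 5 = 0 := congr_fun h 0
  have h1 : z 1 = 0 := congr_fun h 1
  have h2 : z 0 * z 5 - 2 * z 1 * z 4 - z 2 - z 4 * (z 3 * z 4 - z 2 * z 5) = 0 :=
    congr_fun h 2
  have h3 : z 5 * (z 3 * z 4 - z 2 * z 5) - 1 + z 3 = 0 := congr_fun h 3
  have h4 : z 0 = z 2 * z 4 := sub_eq_zero.1 (congr_fun h 4)
  have h5 : z 1 * z 4 ^ 2 - z 0 * z 4 * z 5 + z 5 ^ 2 = 0 := congr_fun h 5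
  generalize z 4 = x at *
  generalize z 5 = y at *
  generalize z 2 = u at *
  generalize z 3 = v at *
  rw [h1, h4] at h2 h5
  rw [h4] at h0
  have hu : u * (1 - x * y - (x * y) ^ 2) = -x ^ 2 := by
    linear_combination (-(1 + x * y)) * h2 - x ^ 2 * h3
  have hyy : y * (y * (1 - x * y - (x * y) ^ 2) + x ^ 4) = 0 := by
    linear_combination (1 - x * y - x ^ 2 * y ^ 2) * h5 + x ^ 2 * y * hu
  have ht₁ : (1 + x * y) * (y * (1 - 2 * (x * y) ^ 2) + x ^ 4) = 0 := by
    linear_combination (1 - x * y - (x * y) ^ 2) * (y * h3 - (1 + x * y) * h0)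
      + ((1 + x * y) * x ^ 2 + y ^ 3) * hu
  have ht₂ : x ^ 2 * (y * (1 - 2 * (x * y) ^ 2) + x ^ 4) = 0 := by
    linear_combination -(1 - x * y - (x * y) ^ 2) * (y * h2 + x ^ 2 * h0)
      + (2 * x * y ^ 2 - y + x ^ 4) * hu
  have ht : y * (1 - 2 * (x * y) ^ 2) + x ^ 4 = 0 := by
    linear_combination (1 - x * y) * ht₁ + y ^ 2 * ht₂
  exact eq_and_pow_eq_of_relations ht (by linear_combination y * ht - hyy)

/-- The polynomial whose roots, with multiplicities, are the values of `b₁` on the solutions of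
the system `P₀ · F = 0`. -/
noncomputable def specialPolynomial (R : Type*) [CommRing R] : Polynomial R :=
  Polynomial.X ^ 18 - Polynomial.X ^ 13

lemma monic_specialPolynomial (R : Type*) [CommRing R] : (specialPolynomial R).Monic := by
  rw [specialPolynomial]
  monicity!

lemma natDegree_specialPolynomial (R : Type*) [CommRing R] [Nontrivial R] :
    (specialPolynomial R).natDegree = 18 := by
  rw [specialPolynomial]
  compute_degree!

lemma span_pow_eq_top_of_specialMatrix_mulVec_eq_zero {O : Type*} [CommRing O] [Algebra O C]
    {z : Fin 6 → C} (h : specialMatrix C *ᵥ conicEval z = 0)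
    (hC : Algebra.adjoin O {z 4, z 5} = ⊤) :
    Submodule.span O (Set.range fun i : Fin 18 => z 4 ^ (i : ℕ)) = ⊤ := by
  nontriviality O
  obtain ⟨hy, hx⟩ := eq_and_pow_eq_of_specialMatrix_mulVec_eq_zero h
  have hC' : Algebra.adjoin O {z 4} = ⊤ := by
    rw [eq_top_iff, ← hC, Algebra.adjoin_le_iff]
    have hx : z 4 ∈ Algebra.adjoin O {z 4} := Algebra.self_mem_adjoin_singleton O _
    rintro _ (rfl | rfl)
    · exact hx
    · rw [hy]
      exact add_mem (neg_mem (pow_mem hx 4)) (mul_mem (ofNat_mem _ 2) (pow_mem hx 14))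
  have hspan := Submodule.span_range_natDegree_eq_adjoin (monic_specialPolynomial O) (x := z 4)
    (by simp [specialPolynomial, hx])
  rw [natDegree_specialPolynomial, hC', Algebra.top_toSubmodule] at hspan
  rw [← hspan]
  congr 1
  ext w
  simp [Fin.exists_iff]

end SpecialSolution

section Elimination

variable {A : Type*} [CommRing A] {z : Fin 6 → A}

lemma conicEval_mem_of_mul_mem {S : Type*} [SetLike S A] [AddSubgroupClass S A] {N : S}
    (hx : ∀ w ∈ N, z 4 * w ∈ N) (hy : ∀ w ∈ N, z 5 * w ∈ N) (h1 : 1 ∈ N) (h₀ : z 0 ∈ N)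
    (h₁ : z 1 ∈ N) (h₂ : z 2 ∈ N) (h₃ : z 3 ∈ N) (l : Fin 14) : conicEval z l ∈ N := by
  have hy1 := hy _ h1
  have hxz₁ := hx _ h₁
  have hd : z 4 * z 3 - z 5 * z 2 ∈ N := sub_mem (hx _ h₃) (hy _ h₂)
  have hF : conicEval z = ![1, z 0, z 1, z 2, z 3, z 4 * z 2, z 5 * z 2, z 4 * z 3, z 5 * z 3,
      z 4 * z 0 - (z 5 * 1 + z 5 * 1), z 5 * z 0 - (z 4 * z 1 + z 4 * z 1),
      z 4 * (z 4 * z 3 - z 5 * z 2), z 5 * (z 4 * z 3 - z 5 * z 2),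
      z 4 * (z 4 * z 1) - z 4 * (z 5 * z 0) + z 5 * (z 5 * 1)] := by
    ext k
    fin_cases k <;> simp only [conicEval, Fin.reduceFinMk, Matrix.cons_val] <;> ring
  rw [hF]
  fin_cases l
  exacts [h1, h₀, h₁, h₂, h₃, hx _ h₂, hy _ h₂, hx _ h₃, hy _ h₃,
    sub_mem (hx _ h₀) (add_mem hy1 hy1), sub_mem (hy _ h₀) (add_mem hxz₁ hxz₁), hx _ hd, hy _ hd,
    add_mem (sub_mem (hx _ hxz₁) (hx _ (hy _ h₀))) (hy _ hy1)]

lemma conicEval_mem_span_one_sup {T : Type*} [CommRing T] [Algebra T A] {x y : T}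
    (hx : algebraMap T A x = z 4) (hy : algebraMap T A y = z 5) {J : Submodule T A}
    (hJ : ∀ k, (specialMatrix A *ᵥ conicEval z) k ∈ J) (l : Fin 14) :
    conicEval z l ∈ Submodule.span T {1} ⊔ J := by
  have mem_iff (w : A) :
      w ∈ Submodule.span T {1} ⊔ J ↔ J.mkQ w ∈ Submodule.span T {J.mkQ 1} := by
    rw [← Set.image_singleton (f := J.mkQ), ← Submodule.map_span, ← Submodule.mem_comap,
      Submodule.comap_map_mkQ, sup_comm]
  have hrows : specialMatrix A *ᵥ conicEval z =
      ![x • z 0 - (2 * y) • (1 : A) + y • z 3, z 1,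
        y • z 0 - (2 * x) • z 1 - z 2 - (x ^ 2 • z 3 - (x * y) • z 2),
        (x * y) • z 3 - y ^ 2 • z 2 - 1 + z 3, z 0 - x • z 2,
        x ^ 2 • z 1 - (x * y) • z 0 + y ^ 2 • 1] := by
    ext k
    rw [specialMatrix_mulVec]
    fin_cases k <;> simp only [conicEval, Fin.reduceFinMk, Matrix.cons_val, Algebra.smul_def,
      map_mul, map_pow, map_ofNat, hx, hy] <;> ring
  have hJ₀ (k : Fin 6) : J.mkQ ((specialMatrix A *ᵥ conicEval z) k) = 0 :=
    (Submodule.Quotient.mk_eq_zero J).2 (hJ k)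
  simp only [hrows, Fin.forall_fin_succ, Fin.reduceSucc, Matrix.cons_val, map_sub, map_add,
    map_smul, IsEmpty.forall_iff, and_true] at hJ₀
  obtain ⟨h₀, h₁, h₂, h₃, h₄, h₅⟩ := hJ₀
  obtain ⟨m₀, m₂, m₃⟩ := mem_span_singleton_of_rows h₀ h₁ h₂ h₃ h₄ h₅
  have hmul {t : T} {c w : A} (hc : algebraMap T A t = c) (hw : w ∈ Submodule.span T {1} ⊔ J) :
      c * w ∈ Submodule.span T {1} ⊔ J := by
    rw [← hc, ← Algebra.smul_def]
    exact Submodule.smul_mem _ t hw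
  refine conicEval_mem_of_mul_mem (fun _ => hmul hx) (fun _ => hmul hy) ?_ ((mem_iff _).2 m₀) ?_
    ((mem_iff _).2 m₂) ((mem_iff _).2 m₃) l
  · exact Submodule.mem_sup_left (Submodule.mem_span_singleton_self 1)
  · rw [mem_iff, h₁]
    exact zero_mem _

end Elimination

section NearSpecial

variable {O A : Type*} [CommRing O] [CommRing A] [Algebra O A]

namespace SolvesSpecialMod

variable {I : Ideal O} {z : Fin 6 → A}

lemma degreeLT_five_le_adjoin (hz : SolvesSpecialMod I z) (h2 : IsUnit (2 : O))
    (hI : I ≤ (⊥ : Ideal O).jacobson) :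
    degreeLT O (z 4) (z 5) (conicEval z) 5 ≤
      Subalgebra.toSubmodule (Algebra.adjoin O {z 4, z 5}) := by
  set T := Algebra.adjoin O {z 4, z 5}
  let x : T := ⟨z 4, Algebra.subset_adjoin (.inl rfl)⟩
  let y : T := ⟨z 5, Algebra.subset_adjoin (.inr rfl)⟩
  let J : Submodule T A := I.map (algebraMap O T) • Submodule.span T (Set.range (conicEval z))
  have hJ : J.restrictScalars O = I • degreeLT O (z 4) (z 5) (conicEval z) 5 := by
    rw [Ideal.smul_restrictScalars,
      restrictScalars_span_adjoin_eq_degreeLT (by norm_num) (hz.degreeLT_six_le h2 hI)]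
  have hrows (k : Fin 6) : (specialMatrix A *ᵥ conicEval z) k ∈ J :=
    hJ.ge (Submodule.smul_mono le_rfl (degreeLT_mono (by norm_num)) (hz k))
  have hF := conicEval_mem_span_one_sup (x := x) (y := y) rfl rfl hrows
  refine Submodule.le_of_le_smul_of_le_jacobson_bot fg_degreeLT hI (Submodule.span_le.2 ?_)
  rintro _ ⟨i, j, l, -, rfl⟩
  obtain ⟨v, hv, w, hw, hvw⟩ :=
    Submodule.mem_sup.1 (Submodule.smul_mem _ (x ^ i * y ^ j) (hF l))
  obtain ⟨t, rfl⟩ := Submodule.mem_span_singleton.1 hv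
  refine Submodule.mem_sup.2 ⟨t, t.2, w, hJ.le hw, ?_⟩
  rw [← show t • (1 : A) = t from mul_one _]
  exact hvw

lemma adjoin_pair_eq_top (hz : SolvesSpecialMod I z) (h2 : IsUnit (2 : O))
    (hI : I ≤ (⊥ : Ideal O).jacobson) (hA : Algebra.adjoin O (Set.range z) = ⊤) :
    Algebra.adjoin O {z 4, z 5} = ⊤ := by
  have hF (l : Fin 14) : conicEval z l ∈ Algebra.adjoin O {z 4, z 5} :=
    hz.degreeLT_five_le_adjoin h2 hI (degreeLT_mono (by norm_num) (mem_degreeLT_one l))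
  rw [eq_top_iff, ← hA, Algebra.adjoin_le_iff]
  rintro _ ⟨j, rfl⟩
  fin_cases j
  exacts [hF 1, hF 2, hF 3, hF 4, Algebra.subset_adjoin (.inl rfl),
    Algebra.subset_adjoin (.inr rfl)]

lemma module_finite (hz : SolvesSpecialMod I z) (h2 : IsUnit (2 : O))
    (hI : I ≤ (⊥ : Ideal O).jacobson) (hA : Algebra.adjoin O (Set.range z) = ⊤) :
    Module.Finite O A := by
  refine ⟨(eq_top_iff.2 fun w _ => ?_ : degreeLT O (z 4) (z 5) (conicEval z) 5 = ⊤) ▸ fg_degreeLT⟩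
  rw [← mul_one w]
  exact mul_mem_degreeLT_of_mem_adjoin (hz.degreeLT_six_le h2 hI)
    (hz.adjoin_pair_eq_top h2 hI hA ▸ Algebra.mem_top)
    (degreeLT_mono (by norm_num) (mem_degreeLT_one 0))

lemma span_pow_eq_top (hz : SolvesSpecialMod I z) (h2 : IsUnit (2 : O))
    (hI : I ≤ (⊥ : Ideal O).jacobson) (hA : Algebra.adjoin O (Set.range z) = ⊤) :
    Submodule.span O (Set.range fun i : Fin 18 => z 4 ^ (i : ℕ)) = ⊤ := by
  let π : A →ₐ[O] A ⧸ I.map (algebraMap O A) := Ideal.Quotient.mkₐ O _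
  have hrows : specialMatrix _ *ᵥ conicEval (π ∘ z) = 0 := by
    ext k
    rw [← map_specialMatrix (π : A →+* _), ← RingHom.coe_coe π, map_mulVec_conicEval]
    refine Ideal.Quotient.eq_zero_iff_mem.2 ?_
    rw [← Submodule.restrictScalars_mem O, ← Ideal.smul_top_eq_map]
    exact Submodule.smul_mono le_rfl le_top (hz k)
  have hπ : Algebra.adjoin O {(π ∘ z) 4, (π ∘ z) 5} = ⊤ := by
    have := AlgHom.map_adjoin π {z 4, z 5}
    rw [hz.adjoin_pair_eq_top h2 hI hA, Algebra.map_top, Set.image_pair] at this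
    exact this.symm.trans ((AlgHom.range_eq_top π).2 Ideal.Quotient.mk_surjective)
  have hspan := span_pow_eq_top_of_specialMatrix_mulVec_eq_zero hrows hπ
  have hmap : (Submodule.span O (Set.range fun i : Fin 18 => z 4 ^ (i : ℕ))).map
      π.toLinearMap = ⊤ := by
    rw [Submodule.map_span, ← Set.range_comp, ← hspan]
    congr 2
  have := hz.module_finite h2 hI hA
  refine eq_top_iff.2 (Submodule.le_of_le_smul_of_le_jacobson_bot Module.Finite.fg_top hI ?_)
  intro w _
  obtain ⟨v, hv, hvw⟩ := hmap.ge (Submodule.mem_top (x := π w))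
  refine Submodule.mem_sup.2 ⟨v, hv, w - v, ?_, add_sub_cancel v w⟩
  rw [Ideal.smul_top_eq_map]
  exact (Ideal.Quotient.mk_eq_mk_iff_sub_mem w v).1 hvw.symm

lemma of_mulVec_eq_zero {P : Matrix (Fin 6) (Fin 14) O}
    (hP : ∀ i j, specialMatrix O i j - P i j ∈ I)
    (hz : P.map (algebraMap O A) *ᵥ conicEval z = 0) : SolvesSpecialMod I z := by
  intro k
  have key : (specialMatrix A *ᵥ conicEval z) k =
      ∑ l, (specialMatrix O k l - P k l) • conicEval z l := by
    rw [← sub_zero (specialMatrix A *ᵥ _), ← hz, ← map_specialMatrix (algebraMap O A),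
      ← Matrix.sub_mulVec]
    simp [Matrix.mulVec, dotProduct, Algebra.smul_def]
  rw [key]
  exact sum_mem fun l _ => Submodule.smul_mem_smul (hP k l) (mem_degreeLT_one l)

end SolvesSpecialMod

end NearSpecial

/-! ### Spreading out -/

section SpreadingOut

variable {R : Type*} [CommRing R]

lemma localized'_eq_top_iff {R' M M' : Type*} [CommRing R'] [Algebra R R'] [AddCommGroup M]
    [Module R M] [AddCommGroup M'] [Module R M'] [Module R' M'] [IsScalarTower R R' M']
    (S : Submonoid R) [IsLocalization S R'] (f : M →ₗ[R] M') [IsLocalizedModule S f]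
    (N : Submodule R M) :
    N.localized' R' S f = ⊤ ↔ ∀ w, ∃ s ∈ S, s • w ∈ N := by
  refine ⟨fun h w => ?_, fun h => eq_top_iff.2 fun y _ => ?_⟩
  · obtain ⟨n, hn, t, hnt⟩ := (Submodule.mem_localized' R' S f N (f w)).1 (h ▸ trivial)
    rw [IsLocalizedModule.mk'_eq_iff, Submonoid.smul_def, ← map_smul] at hnt
    obtain ⟨c, hc⟩ := IsLocalizedModule.exists_of_eq (S := S) hnt
    refine ⟨c * t, mul_mem c.2 t.2, ?_⟩
    rw [mul_smul]
    exact hc ▸ N.smul_mem c hn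
  · obtain ⟨⟨w, t⟩, rfl⟩ := IsLocalizedModule.mk'_surjective S f y
    obtain ⟨s, hs, hsw⟩ := h w
    exact ⟨s • w, hsw, ⟨s, hs⟩ * t, IsLocalizedModule.mk'_cancel_left f w ⟨s, hs⟩ t⟩

variable {U : Type*} [CommRing U] [Algebra R U]

lemma exists_pow_smul_mul_mem {s : R} {N : Submodule R U} {G : Set U}
    (h : ∀ x ∈ G, ∀ u ∈ N, s • (x * u) ∈ N) {w : U} (hw : w ∈ Algebra.adjoin R G) :
    ∃ n : ℕ, ∀ u ∈ N, s ^ n • (w * u) ∈ N := by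
  induction hw using Algebra.adjoin_induction with
  | mem x hx => exact ⟨1, by simpa using h x hx⟩
  | algebraMap r => exact ⟨0, fun u hu => by simpa [← Algebra.smul_def] using N.smul_mem r hu⟩
  | add x y _ _ hx hy =>
    obtain ⟨m, hm⟩ := hx
    obtain ⟨n, hn⟩ := hy
    refine ⟨m + n, fun u hu => ?_⟩
    rw [add_mul, smul_add]
    refine add_mem ?_ ?_
    · rw [pow_add, mul_comm, mul_smul]
      exact N.smul_mem _ (hm u hu)
    · rw [pow_add, mul_smul]
      exact N.smul_mem _ (hn u hu)
  | mul x y _ _ hx hy =>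
    obtain ⟨m, hm⟩ := hx
    obtain ⟨n, hn⟩ := hy
    refine ⟨m + n, fun u hu => ?_⟩
    rw [pow_add, mul_smul, mul_assoc, ← mul_smul_comm]
    exact hm _ (hn u hu)

lemma exists_forall_pow_smul_mem [Algebra.FiniteType R U] {S : Submonoid R} {N : Submodule R U}
    (hN : N.FG) (h : ∀ w, ∃ s ∈ S, s • w ∈ N) :
    ∃ s ∈ S, ∀ w, ∃ t ∈ Submonoid.powers s, t • w ∈ N := by
  obtain ⟨G, hG⟩ := (‹Algebra.FiniteType R U› :).out
  obtain ⟨V, rfl⟩ := hN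
  choose c hcS hc using h
  let s := c 1 * ∏ q ∈ G ×ˢ V, c (q.1 * q.2)
  have smul_mem_of_dvd {w : U} (hw : c w ∣ s) : s • w ∈ Submodule.span R (V : Set U) := by
    obtain ⟨r, hr⟩ := hw
    rw [hr, mul_comm, mul_smul]
    exact Submodule.smul_mem _ r (hc w)
  have smul_mul_mem : ∀ x ∈ (G : Set U), ∀ u ∈ Submodule.span R (V : Set U),
      s • (x * u) ∈ Submodule.span R (V : Set U) := by
    intro x hx u hu
    induction hu using Submodule.span_induction with
    | mem v hv =>
      refine smul_mem_of_dvd (dvd_mul_of_dvd_right ?_ _)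
      exact Finset.dvd_prod_of_mem (fun q : U × U => c (q.1 * q.2)) (Finset.mk_mem_product hx hv)
    | zero => simp
    | add u v _ _ hu hv =>
      rw [mul_add, smul_add]
      exact add_mem hu hv
    | smul r u _ hu =>
      rw [mul_smul_comm, smul_comm]
      exact Submodule.smul_mem _ r hu
  refine ⟨s, mul_mem (hcS 1) (prod_mem fun q _ => hcS _), fun w => ?_⟩
  obtain ⟨n, hn⟩ := exists_pow_smul_mul_mem smul_mul_mem (w := w) (by simp [hG])
  have hns := hn _ (smul_mem_of_dvd (dvd_mul_right (c 1) _))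
  rw [mul_smul_comm, mul_one, ← mul_smul, ← pow_succ] at hns
  exact ⟨s ^ (n + 1), ⟨n + 1, rfl⟩, hns⟩

/-- The localization of an algebra at the image of a submonoid of the base ring. -/
abbrev AlgebraLocalization (S : Submonoid R) (U : Type*) [CommRing U] [Algebra R U] : Type _ :=
  Localization (Algebra.algebraMapSubmonoid U S)

lemma span_localization_image_eq_top_iff (S : Submonoid R) (X : Set U) :
    Submodule.span (Localization S) (algebraMap U (AlgebraLocalization S U) '' X) = ⊤ ↔
      ∀ w, ∃ s ∈ S, s • w ∈ Submodule.span R X := by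
  rw [← localized'_eq_top_iff (R' := Localization S) S
    (IsScalarTower.toAlgHom R U (AlgebraLocalization S U)).toLinearMap, Submodule.localized'_span]
  rfl

lemma exists_span_away_image_eq_top [Algebra.FiniteType R U] {S : Submonoid R} {X : Set U}
    (hX : X.Finite)
    (h : Submodule.span (Localization S) (algebraMap U (AlgebraLocalization S U) '' X) = ⊤) :
    ∃ s ∈ S, Submodule.span (Localization.Away s)
      (algebraMap U (AlgebraLocalization (Submonoid.powers s) U) '' X) = ⊤ := by
  simp only [span_localization_image_eq_top_iff] at h ⊢
  exact exists_forall_pow_smul_mem (Submodule.fg_span hX) h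

lemma adjoin_localization_image_eq_top (S : Submonoid R) {X : Set U}
    (h : Algebra.adjoin R X = ⊤) :
    Algebra.adjoin (Localization S) (algebraMap U (AlgebraLocalization S U) '' X) = ⊤ := by
  have hX : Submodule.span R (Submonoid.closure X : Set U) = ⊤ := by
    rw [← Algebra.adjoin_eq_span, h, Algebra.top_toSubmodule]
  rw [← Algebra.toSubmodule_eq_top, Algebra.adjoin_eq_span, ← MonoidHom.coe_coe,
    ← MonoidHom.map_mclosure]
  exact (span_localization_image_eq_top_iff S _).2 fun w => ⟨1, one_mem S, by simp [hX]⟩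

end SpreadingOut

lemma exists_span_away_pow_eq_top {R U : Type*} [CommRing R] [CommRing U] [Algebra R U]
    (m : Ideal R) [m.IsPrime] (h2 : (2 : R) ∉ m) {P : Matrix (Fin 6) (Fin 14) R}
    (hP : ∀ i j, specialMatrix R i j - P i j ∈ m) {z : Fin 6 → U}
    (hz : P.map (algebraMap R U) *ᵥ conicEval z = 0)
    (hgen : Algebra.adjoin R (Set.range z) = ⊤) :
    ∃ s ∉ m, Submodule.span (Localization.Away s)
      (algebraMap U (AlgebraLocalization (Submonoid.powers s) U) ''
        Set.range fun i : Fin 18 => z 4 ^ (i : ℕ)) = ⊤ := by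
  let O := Localization.AtPrime m
  let A := AlgebraLocalization m.primeCompl U
  have : Algebra.FiniteType R U := ⟨(Set.finite_range z).toFinset, by simpa using hgen⟩
  have hzA : (P.map (algebraMap R O)).map (algebraMap O A) *ᵥ
      conicEval (algebraMap U A ∘ z) = 0 := by
    have hmap : (P.map (algebraMap R O)).map (algebraMap O A) =
        (P.map (algebraMap R U)).map (algebraMap U A) := by
      ext i j
      simp only [Matrix.map_apply, ← IsScalarTower.algebraMap_apply]
    rw [hmap, map_mulVec_conicEval, hz]
    ext
    simp
  have hPO (i j) : specialMatrix O i j - P.map (algebraMap R O) i j ∈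
      IsLocalRing.maximalIdeal O := by
    rw [← map_specialMatrix (algebraMap R O), Matrix.map_apply, Matrix.map_apply, ← map_sub,
      ← Localization.AtPrime.map_eq_maximalIdeal]
    exact Ideal.mem_map_of_mem _ (hP i j)
  have h2O : IsUnit (2 : O) := by
    have := IsLocalization.map_units O (⟨2, h2⟩ : m.primeCompl)
    rwa [show algebraMap R O ((⟨2, h2⟩ : m.primeCompl) : R) = 2 from map_ofNat _ 2] at this
  refine exists_span_away_image_eq_top (S := m.primeCompl) (Set.finite_range _) ?_
  have := (SolvesSpecialMod.of_mulVec_eq_zero hPO hzA).span_pow_eq_top h2O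
    (IsLocalRing.maximalIdeal_le_jacobson _) (by
      rw [Set.range_comp]
      exact adjoin_localization_image_eq_top m.primeCompl hgen)
  rw [← Set.range_comp]
  simpa [Function.comp_def] using this

/-! ### Generic fibres -/

lemma separable_map_of_map_resultant_ne_zero {R L : Type*} [CommRing R] [Field L]
    {f : Polynomial R} (hf : f.Monic) (φ : R →+* L)
    (h : φ (f.resultant f.derivative) ≠ 0) : (f.map φ).Separable := by
  by_cases hdeg : f.natDegree = 0
  · simp [Polynomial.eq_one_of_monic_natDegree_zero hf hdeg]
  obtain ⟨p, q, -, -, hpq⟩ :=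
    Polynomial.exists_mul_add_mul_eq_C_resultant f f.derivative le_rfl le_rfl (.inl hdeg)
  have hcomb : f.map φ * p.map φ + (f.map φ).derivative * q.map φ =
      Polynomial.C (φ (f.resultant f.derivative)) := by
    rw [Polynomial.derivative_map, ← Polynomial.map_mul, ← Polynomial.map_mul,
      ← Polynomial.map_add, hpq, Polynomial.map_C]
  have hinv : Polynomial.C (φ (f.resultant f.derivative))⁻¹ *
      Polynomial.C (φ (f.resultant f.derivative)) = 1 := by
    rw [← Polynomial.C_mul, inv_mul_cancel₀ h, Polynomial.C_1]
  exact ⟨Polynomial.C (φ (f.resultant f.derivative))⁻¹ * p.map φ,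
    Polynomial.C (φ (f.resultant f.derivative))⁻¹ * q.map φ,
    by linear_combination Polynomial.C (φ (f.resultant f.derivative))⁻¹ * hcomb + hinv⟩

section MinimalPolynomial

variable {R S : Type*} [CommRing R] [CommRing S] [Algebra R S]

lemma natDegree_minpoly_algHom_le {k T : Type*} [Field k] [Algebra R k] [CommRing T] [Algebra k T]
    [Algebra R T] [IsScalarTower R k T] (φ : S →ₐ[R] T) {x : S} (hx : IsIntegral R x) :
    (minpoly k (φ x)).natDegree ≤ (minpoly R x).natDegree := by
  have hmonic := (minpoly.monic hx).map (algebraMap R k)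
  have hroot : Polynomial.aeval (φ x) ((minpoly R x).map (algebraMap R k)) = 0 := by
    rw [Polynomial.aeval_map_algebraMap, Polynomial.aeval_algHom_apply, minpoly.aeval, map_zero]
  calc (minpoly k (φ x)).natDegree ≤ ((minpoly R x).map (algebraMap R k)).natDegree :=
        Polynomial.natDegree_le_natDegree (minpoly.min k _ hmonic hroot)
    _ = (minpoly R x).natDegree := (minpoly.monic hx).natDegree_map _

lemma resultant_minpoly_derivative_ne_zero [IsDomain R] [IsIntegrallyClosed R] [CharZero R]
    [IsDomain S] [Module.IsTorsionFree R S] {x : S} (hx : IsIntegral R x) :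
    (minpoly R x).resultant (minpoly R x).derivative ≠ 0 := by
  let K := FractionRing R
  let L := FractionRing S
  have hinj := IsFractionRing.injective R K
  have : CharZero K := charZero_of_injective_algebraMap hinj
  let _ : Algebra K L := FractionRing.liftAlgebra R L
  have hfrac := minpoly.isIntegrallyClosed_eq_field_fractions K L hx
  have hsep : (minpoly K (algebraMap S L x)).Separable :=
    (minpoly.irreducible (hx.algebraMap.tower_top)).separable
  rw [hfrac, Polynomial.Separable, Polynomial.derivative_map] at hsep
  have := Polynomial.resultant_ne_zero _ _ hsep
  rw [Polynomial.natDegree_map_eq_of_injective hinj, Polynomial.natDegree_map_eq_of_injective hinj,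
    Polynomial.resultant_map_map] at this
  exact fun h => this (by rw [h, map_zero])

lemma card_algHom_eq_dim (pb : PowerBasis R S) {L : Type*} [Field L] [IsSepClosed L]
    [Algebra R L] (h : ((minpoly R pb.gen).map (algebraMap R L)).Separable) :
    Nat.card (S →ₐ[R] L) = pb.dim := by
  classical
  have := (algebraMap R L).domain_nontrivial
  rw [Nat.card_congr pb.liftEquiv', ← pb.natDegree_minpoly,
    ← (minpoly.monic pb.isIntegral_gen).natDegree_map (algebraMap R L),
    (IsSepClosed.splits_of_separable _ h).natDegree_eq_card_roots,
    ← Multiset.toFinset_card_of_nodup (Polynomial.nodup_roots h)]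
  simp only [Polynomial.aroots, ← Multiset.mem_toFinset, Nat.card_eq_fintype_card,
    Fintype.card_coe]

end MinimalPolynomial

/-- Algebra homomorphisms to an algebra over the localized base ring factor through the localized
algebra. -/
noncomputable def algHomEquivLocalization {R U T : Type*} [CommRing R] [CommRing U] [Algebra R U]
    [CommRing T] [Algebra R T] (S : Submonoid R) [Algebra (Localization S) T]
    [IsScalarTower R (Localization S) T] :
    (U →ₐ[R] T) ≃ (AlgebraLocalization S U →ₐ[Localization S] T) :=
  have : Algebra.IsPushout R (Localization S) U (AlgebraLocalization S U) :=
    .symm (Algebra.isPushout_of_isLocalization S _ _ _)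
  (Algebra.TensorProduct.liftEquivRight R (Localization S) U T).trans
    ((Algebra.IsPushout.equiv R (Localization S) U (AlgebraLocalization S U)).arrowCongr .refl)

lemma algHomEquivLocalization_algebraMap {R U T : Type*} [CommRing R] [CommRing U] [Algebra R U]
    [CommRing T] [Algebra R T] (S : Submonoid R) [Algebra (Localization S) T]
    [IsScalarTower R (Localization S) T] (φ : U →ₐ[R] T) (u : U) :
    algHomEquivLocalization S φ (algebraMap U (AlgebraLocalization S U) u) = φ u := by
  have : Algebra.IsPushout R (Localization S) U (AlgebraLocalization S U) :=
    .symm (Algebra.isPushout_of_isLocalization S _ _ _)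
  simp [algHomEquivLocalization, AlgEquiv.arrowCongr, Algebra.TensorProduct.liftEquivRight,
    Algebra.IsPushout.equiv_symm_algebraMap_right]

lemma algebraMapSubmonoid_powers_le_nonZeroDivisors {R U : Type*} [CommRing R] [CommRing U]
    [NoZeroDivisors U] [Algebra R U] {s : R} (hs : algebraMap R U s ≠ 0) :
    Algebra.algebraMapSubmonoid U (Submonoid.powers s) ≤ nonZeroDivisors U := by
  rw [Algebra.algebraMapSubmonoid_powers]
  exact powers_le_nonZeroDivisors_of_noZeroDivisors hs

lemma natDegree_minpoly_le_away {R U k T : Type*} [CommRing R] [CommRing U] [Algebra R U]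
    [Field k] [Algebra R k] [CommRing T] [Algebra k T] [Algebra R T] [IsScalarTower R k T]
    {s : R} (hs : algebraMap R k s ≠ 0) (φ : U →ₐ[R] T) {x : U}
    (hx : IsIntegral (Localization.Away s)
      (algebraMap U (AlgebraLocalization (Submonoid.powers s) U) x)) :
    (minpoly k (φ x)).natDegree ≤ (minpoly (Localization.Away s)
      (algebraMap U (AlgebraLocalization (Submonoid.powers s) U) x)).natDegree := by
  let R' := Localization.Away s
  let _ : Algebra R' k := (IsLocalization.Away.lift s hs.isUnit).toAlgebra
  let _ : Algebra R' T := ((algebraMap k T).comp (algebraMap R' k)).toAlgebra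
  have : IsScalarTower R' k T := .of_algebraMap_eq' rfl
  have : IsScalarTower R R' k :=
    .of_algebraMap_eq' (IsLocalization.Away.lift_comp s hs.isUnit).symm
  have : IsScalarTower R R' T := .to₁₂₄ R R' k T
  rw [← algHomEquivLocalization_algebraMap (Submonoid.powers s) φ x]
  exact natDegree_minpoly_algHom_le _ hx

lemma exists_powerBasis_of_span_pow_eq_top {R S : Type*} [CommRing R] [IsDomain R]
    [IsIntegrallyClosed R] [CommRing S] [IsDomain S] [Algebra R S] [Module.IsTorsionFree R S]
    {x : S} {n : ℕ}
    (h : Submodule.span R (Set.range fun i : Fin n => x ^ (i : ℕ)) = ⊤) :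
    ∃ pb : PowerBasis R S, pb.gen = x ∧ pb.dim ≤ n := by
  have : Module.Finite R S := ⟨(Set.finite_range _).toFinset, by rw [Set.Finite.coe_toFinset, h]⟩
  have hx : Algebra.adjoin R {x} = ⊤ := by
    rw [← Algebra.toSubmodule_eq_top, eq_top_iff, ← h, Submodule.span_le]
    rintro _ ⟨i, rfl⟩
    exact pow_mem (Algebra.self_mem_adjoin_singleton R x) _
  let pb := PowerBasis.ofAdjoinEqTop' (Algebra.IsIntegral.isIntegral x) hx
  refine ⟨pb, PowerBasis.ofAdjoinEqTop'_gen .., ?_⟩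
  rw [← pb.finrank]
  simpa using finrank_le_of_span_eq_top h

lemma exists_forall_card_algHom_eq_of_span_pow_eq_top {R S : Type*} [CommRing R] [IsDomain R]
    [IsIntegrallyClosed R] [CharZero R] [CommRing S] [IsDomain S] [Algebra R S]
    [Module.IsTorsionFree R S] {x : S} {n : ℕ}
    (h : Submodule.span R (Set.range fun i : Fin n => x ^ (i : ℕ)) = ⊤)
    (hn : n ≤ (minpoly R x).natDegree) :
    ∃ d : R, d ≠ 0 ∧ ∀ (L : Type*) [Field L] [IsSepClosed L] [Algebra R L],
      algebraMap R L d ≠ 0 → Nat.card (S →ₐ[R] L) = n := by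
  obtain ⟨pb, rfl, hdim⟩ := exists_powerBasis_of_span_pow_eq_top h
  have hx := pb.isIntegral_gen
  refine ⟨_, resultant_minpoly_derivative_ne_zero hx, fun L _ _ _ hL => ?_⟩
  rw [card_algHom_eq_dim pb (separable_map_of_map_resultant_ne_zero (minpoly.monic hx) _ hL)]
  exact hdim.antisymm (hn.trans_eq pb.natDegree_minpoly)

lemma exists_forall_card_algHom_eq_of_span_away_pow_eq_top {R U : Type*} [CommRing R]
    [IsDomain R] [IsIntegrallyClosed R] [CharZero R] [CommRing U] [IsDomain U] [Algebra R U]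
    [Module.IsTorsionFree R U] {x : U} {n : ℕ} {s : R} (hs : s ≠ 0)
    (hspan : Submodule.span (Localization.Away s)
      (algebraMap U (AlgebraLocalization (Submonoid.powers s) U) ''
        Set.range fun i : Fin n => x ^ (i : ℕ)) = ⊤)
    (hn : n ≤ (minpoly (Localization.Away s)
      (algebraMap U (AlgebraLocalization (Submonoid.powers s) U) x)).natDegree) :
    ∃ Q : R, Q ≠ 0 ∧ ∀ (L : Type*) [Field L] [IsSepClosed L] [Algebra R L],
      algebraMap R L Q ≠ 0 → Nat.card (U →ₐ[R] L) = n := by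
  let R' := Localization.Away s
  let U' := AlgebraLocalization (Submonoid.powers s) U
  have hS : Submonoid.powers s ≤ nonZeroDivisors R :=
    powers_le_nonZeroDivisors_of_noZeroDivisors hs
  have hSU : Algebra.algebraMapSubmonoid U (Submonoid.powers s) ≤ nonZeroDivisors U :=
    algebraMapSubmonoid_powers_le_nonZeroDivisors
      ((FaithfulSMul.algebraMap_eq_zero_iff R U).not.2 hs)
  have : IsDomain R' := IsLocalization.isDomain_of_le_nonZeroDivisors R' hS
  have : IsDomain U' := IsLocalization.isDomain_of_le_nonZeroDivisors U' hSU
  have : IsIntegrallyClosed R' := isIntegrallyClosed_of_isLocalization R' _ hS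
  have : CharZero R' := charZero_of_injective_algebraMap (IsLocalization.injective R' hS)
  have : Module.IsTorsionFree R' U' := .of_isLocalization (R := R) (S := U) hS
  rw [← Set.range_comp] at hspan
  obtain ⟨d, hd, hcount⟩ := exists_forall_card_algHom_eq_of_span_pow_eq_top
    (x := algebraMap U U' x) (by simpa [Function.comp_def] using hspan) hn
  obtain ⟨a, t, rfl⟩ := IsLocalization.exists_mk'_eq (Submonoid.powers s) d
  refine ⟨s * a, mul_ne_zero hs ?_, fun L _ _ _ hL => ?_⟩
  · rintro rfl
    exact hd (IsLocalization.mk'_zero _)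
  rw [map_mul] at hL
  let _ : Algebra R' L :=
    (IsLocalization.Away.lift s (left_ne_zero_of_mul hL).isUnit).toAlgebra
  have : IsScalarTower R R' L := .of_algebraMap_eq' (IsLocalization.Away.lift_comp s _).symm
  rw [Nat.card_congr (algHomEquivLocalization (Submonoid.powers s))]
  refine hcount L fun h => right_ne_zero_of_mul hL ?_
  rw [IsScalarTower.algebraMap_apply R R' L, ← IsLocalization.mk'_spec R' a t, map_mul, h,
    zero_mul]

section Dominance

universe v w

lemma algebraMap_injective_of_le_trdeg {k : Type*} {σ : Type v} {U : Type w} [Field k] [Finite σ]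
    [CommRing U] [IsDomain U] [Algebra k U] [Algebra (MvPolynomial σ k) U]
    [IsScalarTower k (MvPolynomial σ k) U]
    (hσ : Cardinal.lift.{w} (Cardinal.mk σ) ≤ Cardinal.lift.{v} (Algebra.trdeg k U))
    (hint : ∀ u : U, ∃ r : MvPolynomial σ k, algebraMap (MvPolynomial σ k) U r ≠ 0 ∧
      IsIntegral (MvPolynomial σ k) (r • u)) :
    Function.Injective (algebraMap (MvPolynomial σ k) U) := by
  let φ := IsScalarTower.toAlgHom k (MvPolynomial σ k) U
  let x : σ → U := fun i => φ (X i)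
  have haeval : aeval x = φ := algHom_ext fun i => aeval_X x i
  have hrange : φ.range = Algebra.adjoin k (Set.range x) := by
    rw [Algebra.adjoin_range_eq_range_aeval, haeval]
  have : Algebra.IsAlgebraic (Algebra.adjoin k (Set.range x)) U := by
    refine hrange ▸ ⟨fun u => ?_⟩
    obtain ⟨r, hr, hru⟩ := hint u
    have hru' : IsIntegral φ.range (r • u) :=
      IsIntegral.map_of_comp_eq (φ.rangeRestrict : MvPolynomial σ k →+* φ.range)
        (RingHom.id U) rfl hru
    rw [Algebra.smul_def] at hru'
    exact .of_mul (mem_nonZeroDivisors_of_ne_zero hr)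
      (isAlgebraic_algebraMap (φ.rangeRestrict r)) hru'.isAlgebraic
  have := (Algebra.IsAlgebraic.isTranscendenceBasis_of_lift_le_trdeg_of_finite k x hσ).1
  rwa [AlgebraicIndependent, haeval] at this

end Dominance

lemma exists_isIntegral_smul_of_finite_away {R U : Type*} [CommRing R] [CommRing U]
    [IsDomain U] [Algebra R U] {s : R} (hs : algebraMap R U s ≠ 0)
    [Module.Finite (Localization.Away s) (AlgebraLocalization (Submonoid.powers s) U)] (u : U) :
    ∃ r : R, algebraMap R U r ≠ 0 ∧ IsIntegral R (r • u) := by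
  let U' := AlgebraLocalization (Submonoid.powers s) U
  have hinj : Function.Injective (algebraMap U U') := IsLocalization.injective U'
    (algebraMapSubmonoid_powers_le_nonZeroDivisors hs)
  obtain ⟨⟨_, n, rfl⟩, hn⟩ := IsIntegral.exists_multiple_integral_of_isLocalization
    (Rₘ := Localization.Away s) (Submonoid.powers s) (algebraMap U U' u)
    (Algebra.IsIntegral.isIntegral _)
  refine ⟨s ^ n, by simpa using pow_ne_zero n hs, ?_⟩
  rwa [Submonoid.smul_def, ← algebraMap.coe_smul, isIntegral_algebraMap_iff hinj] at hn

/-! ### The incidence variety -/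

/-- The coordinate ring of the space of `6 × 14` matrices. -/
abbrev MatrixRing : Type := MvPolynomial (Fin 6 × Fin 14) ℚ

/-- The coordinate ring of the variety of pairs `(P, z)` with `P · F(z) = 0`. As `F₀ = 1`, the
coordinates of `z` and the last 13 columns of `P` are free and determine the first column. -/
abbrev IncidenceRing : Type := MvPolynomial (Fin 6 ⊕ Fin 6 × Fin 13) ℚ

/-- The point `z` of the universal pair `(P, z)` with `P · F(z) = 0`. -/
noncomputable def incidencePoint (j : Fin 6) : IncidenceRing := X (.inl j)

/-- The matrix `P` of the universal pair `(P, z)` with `P · F(z) = 0`. -/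
noncomputable def incidenceMatrix : Matrix (Fin 6) (Fin 14) IncidenceRing := fun i =>
  Fin.cons (-∑ l : Fin 13, X (.inr (i, l)) * conicEval incidencePoint l.succ)
    fun l => X (.inr (i, l))

noncomputable instance : Algebra MatrixRing IncidenceRing :=
  (aeval (R := ℚ) fun p : Fin 6 × Fin 14 => incidenceMatrix p.1 p.2).toAlgebra

lemma algebraMap_matrixRing_X (p : Fin 6 × Fin 14) :
    algebraMap MatrixRing IncidenceRing (X p) = incidenceMatrix p.1 p.2 :=
  aeval_X (fun p : Fin 6 × Fin 14 => incidenceMatrix p.1 p.2) p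

lemma mvPolynomialX_map_algebraMap :
    (Matrix.mvPolynomialX (Fin 6) (Fin 14) ℚ).map (algebraMap MatrixRing IncidenceRing) =
      incidenceMatrix := by
  ext1 i j
  exact algebraMap_matrixRing_X (i, j)

lemma mulVec_conicEval_eq_zero_iff {A : Type*} [CommRing A] (P : Matrix (Fin 6) (Fin 14) A)
    (z : Fin 6 → A) : P *ᵥ conicEval z = 0 ↔
      ∀ i, P i 0 = -∑ l : Fin 13, P i l.succ * conicEval z l.succ := by
  have hF₀ : conicEval z 0 = 1 := rfl
  simp [funext_iff, Matrix.mulVec, dotProduct, Fin.sum_univ_succ (n := 13), hF₀,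
    add_eq_zero_iff_eq_neg]

lemma incidenceMatrix_mulVec : incidenceMatrix *ᵥ conicEval incidencePoint = 0 :=
  (mulVec_conicEval_eq_zero_iff _ _).2 fun _ => rfl

lemma adjoin_range_incidencePoint :
    Algebra.adjoin MatrixRing (Set.range incidencePoint) = ⊤ := by
  have hX (q) : X q ∈ Algebra.adjoin MatrixRing (Set.range incidencePoint) := by
    rcases q with j | ⟨i, l⟩
    · exact Algebra.subset_adjoin (Set.mem_range_self (f := incidencePoint) j)
    · have := (Algebra.adjoin MatrixRing (Set.range incidencePoint)).algebraMap_mem (X (i, l.succ))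
      rwa [algebraMap_matrixRing_X] at this
  refine eq_top_iff.2 fun u _ => ?_
  induction u using MvPolynomial.induction_on with
  | C r =>
    rw [← algebraMap_eq, IsScalarTower.algebraMap_apply ℚ MatrixRing IncidenceRing]
    exact Subalgebra.algebraMap_mem _ _
  | add p q hp hq => exact add_mem (hp trivial) (hq trivial)
  | mul_X p q hp => exact mul_mem (hp trivial) (hX q)

section Points

variable {T : Type*} [CommRing T]

lemma incidenceMatrix_map_aeval [Algebra ℚ T] {P : Matrix (Fin 6) (Fin 14) T} {z : Fin 6 → T}
    (hz : P *ᵥ conicEval z = 0) :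
    incidenceMatrix.map (aeval (R := ℚ) (Sum.elim z fun q => P q.1 q.2.succ)) = P := by
  let f : IncidenceRing →ₐ[ℚ] T := aeval (Sum.elim z fun q => P q.1 q.2.succ)
  have hf (q) : f (X q) = Sum.elim z (fun q => P q.1 q.2.succ) q := aeval_X _ q
  have hpoint : f ∘ incidencePoint = z := funext fun j => hf (.inl j)
  have hF (l) : f (conicEval incidencePoint l) = conicEval z l := by
    rw [← hpoint]
    exact (congrFun (conicEval_comp (f : IncidenceRing →+* T) incidencePoint) l).symm
  ext i j
  cases j using Fin.cases with
  | zero =>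
    calc f (-∑ l : Fin 13, X (.inr (i, l)) * conicEval incidencePoint l.succ)
        = -∑ l : Fin 13, P i l.succ * conicEval z l.succ := by
          simp only [map_neg, map_sum, map_mul, hf, hF, Sum.elim_inr]
      _ = P i 0 := ((mulVec_conicEval_eq_zero_iff P z).1 hz i).symm
  | succ l => exact hf (.inr (i, l))

variable [Algebra MatrixRing T]

lemma mvPolynomialX_map_mulVec_of_algHom (φ : IncidenceRing →ₐ[MatrixRing] T) :
    (Matrix.mvPolynomialX (Fin 6) (Fin 14) ℚ).map (algebraMap MatrixRing T) *ᵥ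
      conicEval (φ ∘ incidencePoint) = 0 := by
  have hφ : (Matrix.mvPolynomialX (Fin 6) (Fin 14) ℚ).map (algebraMap MatrixRing T) =
      incidenceMatrix.map (φ : IncidenceRing →+* T) := by
    rw [← mvPolynomialX_map_algebraMap, Matrix.map_map]
    ext1 i j
    exact (φ.commutes _).symm
  rw [hφ]
  refine (map_mulVec_conicEval (φ : IncidenceRing →+* T) _ _).trans ?_
  rw [incidenceMatrix_mulVec]
  exact funext fun _ => map_zero φ

lemma exists_algHom_of_mulVec_eq_zero {z : Fin 6 → T}
    (hz : (Matrix.mvPolynomialX (Fin 6) (Fin 14) ℚ).map (algebraMap MatrixRing T) *ᵥ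
      conicEval z = 0) :
    ∃ φ : IncidenceRing →ₐ[MatrixRing] T, φ ∘ incidencePoint = z := by
  let _ : Algebra ℚ T := Algebra.compHom T (algebraMap ℚ MatrixRing)
  let v := Sum.elim z fun q : Fin 6 × Fin 13 => algebraMap MatrixRing T (X (q.1, q.2.succ))
  let f : IncidenceRing →ₐ[ℚ] T := aeval v
  have hf : f.comp (IsScalarTower.toAlgHom ℚ MatrixRing IncidenceRing) =
      IsScalarTower.toAlgHom ℚ MatrixRing T := by
    refine algHom_ext fun p => ?_
    refine (congrArg f (algebraMap_matrixRing_X p)).trans ?_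
    exact congrFun₂ (incidenceMatrix_map_aeval hz) p.1 p.2
  have hfX (q) : f (X q) = v q := aeval_X v q
  exact ⟨{ f with commutes' := DFunLike.congr_fun hf }, funext fun j => hfX (.inl j)⟩

/-- The incidence variety represents the solutions of `P · F = 0`. -/
noncomputable def algHomIncidenceEquiv : (IncidenceRing →ₐ[MatrixRing] T) ≃
    {z : Fin 6 → T // (Matrix.mvPolynomialX (Fin 6) (Fin 14) ℚ).map (algebraMap MatrixRing T) *ᵥ
      conicEval z = 0} :=
  .ofBijective (fun φ => ⟨φ ∘ incidencePoint, mvPolynomialX_map_mulVec_of_algHom φ⟩) <| by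
    refine ⟨fun φ ψ h => ?_, fun z => ?_⟩
    · refine AlgHom.ext_of_adjoin_eq_top adjoin_range_incidencePoint ?_
      rintro _ ⟨j, rfl⟩
      exact congrFun (congrArg Subtype.val h) j
    · obtain ⟨φ, hφ⟩ := exists_algHom_of_mulVec_eq_zero z.2
      exact ⟨φ, Subtype.ext hφ⟩

end Points

section SpecialFibrePoints

/-- The point with `b₁ = T` of the fibre over the special matrix, found by solving `P₀ · F = 0`
modulo `T¹⁸ - T¹³`. -/
def specialPoint {A : Type*} [CommRing A] (T : A) : Fin 6 → A :=
  ![-T ^ 3 + T ^ 8 + T ^ 13, 0, -T ^ 2 + T ^ 7 - 2 * T ^ 12 + 3 * T ^ 17, 1 + T ^ 5 - T ^ 15, T,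
    -T ^ 4 + 2 * T ^ 14]

lemma specialMatrix_mulVec_specialPoint {A : Type*} [CommRing A] {T : A} (h : T ^ 18 = T ^ 13) :
    specialMatrix A *ᵥ conicEval (specialPoint T) = 0 := by
  rw [specialMatrix_mulVec]
  ext k
  fin_cases k <;> simp [conicEval, specialPoint]
  · linear_combination (-2 * T ^ 11 - 2 * T ^ 6 + T) * h
  · linear_combination (6 * T ^ 14 + 4 * T ^ 9 + 5 * T ^ 4) * h
  · linear_combination (-12 * T ^ 27 - 4 * T ^ 22 + 4 * T ^ 17 - 2 * T ^ 12 - T ^ 7) * h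
  · linear_combination (-3) * h
  · linear_combination (2 * T ^ 10 - 1) * h

lemma exists_algHom_apply_incidencePoint_four {T : Type*} [CommRing T] [Algebra MatrixRing T]
    (hT : (Matrix.mvPolynomialX (Fin 6) (Fin 14) ℚ).map (algebraMap MatrixRing T) =
      specialMatrix T) {t : T} (ht : t ^ 18 = t ^ 13) :
    ∃ φ : IncidenceRing →ₐ[MatrixRing] T, φ (incidencePoint 4) = t := by
  obtain ⟨φ, hφ⟩ := exists_algHom_of_mulVec_eq_zero (z := specialPoint t)
    (by rw [hT, specialMatrix_mulVec_specialPoint ht])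
  exact ⟨φ, congrFun hφ 4⟩

variable {k : Type*} [Field k] [Algebra MatrixRing k]

lemma algebraMap_incidenceRing_ne_zero
    (hk : (Matrix.mvPolynomialX (Fin 6) (Fin 14) ℚ).map (algebraMap MatrixRing k) =
      specialMatrix k) {s : MatrixRing} (hs : algebraMap MatrixRing k s ≠ 0) :
    algebraMap MatrixRing IncidenceRing s ≠ 0 := by
  obtain ⟨φ, -⟩ := exists_algHom_apply_incidencePoint_four hk (t := (1 : k)) (by simp)
  exact fun h => hs (by rw [← φ.commutes, h, map_zero])

lemma eighteen_le_natDegree_minpoly_away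
    (hk : (Matrix.mvPolynomialX (Fin 6) (Fin 14) ℚ).map (algebraMap MatrixRing k) =
      specialMatrix k) {s : MatrixRing} (hs : algebraMap MatrixRing k s ≠ 0)
    (hx : IsIntegral (Localization.Away s) (algebraMap IncidenceRing
      (AlgebraLocalization (Submonoid.powers s) IncidenceRing) (incidencePoint 4))) :
    18 ≤ (minpoly (Localization.Away s) (algebraMap IncidenceRing
      (AlgebraLocalization (Submonoid.powers s) IncidenceRing) (incidencePoint 4))).natDegree := by
  let T := AdjoinRoot (specialPolynomial k)
  have hT : (Matrix.mvPolynomialX (Fin 6) (Fin 14) ℚ).map (algebraMap MatrixRing T) =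
      specialMatrix T := by
    rw [← map_specialMatrix (algebraMap k T), ← hk, Matrix.map_map, ← RingHom.coe_comp,
      ← IsScalarTower.algebraMap_eq]
  have hroot : AdjoinRoot.root (specialPolynomial k) ^ 18 = AdjoinRoot.root _ ^ 13 := by
    have := AdjoinRoot.eval₂_root (specialPolynomial k)
    rwa [specialPolynomial, Polynomial.eval₂_sub, Polynomial.eval₂_X_pow, Polynomial.eval₂_X_pow,
      sub_eq_zero] at this
  obtain ⟨φ, hφ⟩ := exists_algHom_apply_incidencePoint_four hT hroot
  have hmonic := monic_specialPolynomial k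
  have hdeg : (minpoly k (AdjoinRoot.root (specialPolynomial k))).natDegree = 18 := by
    rw [AdjoinRoot.minpoly_root hmonic.ne_zero, hmonic.leadingCoeff, inv_one, Polynomial.C_1,
      mul_one, natDegree_specialPolynomial]
  rw [← hdeg, ← hφ]
  exact natDegree_minpoly_le_away hs φ hx

end SpecialFibrePoints

lemma algebraMap_incidenceRing_injective {s : MatrixRing}
    (hs : algebraMap MatrixRing IncidenceRing s ≠ 0)
    [Module.Finite (Localization.Away s)
      (AlgebraLocalization (Submonoid.powers s) IncidenceRing)] :
    Function.Injective (algebraMap MatrixRing IncidenceRing) := by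
  refine algebraMap_injective_of_le_trdeg ?_ (exists_isIntegral_smul_of_finite_away hs)
  rw [MvPolynomial.trdeg_of_isDomain]
  simp

/-- A matrix `P` makes `L` an algebra over the coordinate ring of the space of matrices, by
evaluation at `P`; the `L`-points of the fibre over `P` are then the homomorphisms of algebras from
`IncidenceRing` to `L`. -/
noncomputable abbrev evalAlgebra {L : Type*} [CommRing L] [Algebra ℚ L]
    (P : Matrix (Fin 6) (Fin 14) L) : Algebra MatrixRing L :=
  (aeval (R := ℚ) fun p : Fin 6 × Fin 14 => P p.1 p.2).toAlgebra

lemma mvPolynomialX_map_evalAlgebra {L : Type*} [CommRing L] [Algebra ℚ L]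
    (P : Matrix (Fin 6) (Fin 14) L) :
    letI := evalAlgebra P
    (Matrix.mvPolynomialX (Fin 6) (Fin 14) ℚ).map (algebraMap MatrixRing L) = P := by
  ext i j
  exact aeval_X _ (i, j)

lemma exists_forall_card_algHom_incidenceRing_eq_of_specialMatrix {k : Type*} [Field k]
    [Algebra MatrixRing k]
    (hk : (Matrix.mvPolynomialX (Fin 6) (Fin 14) ℚ).map (algebraMap MatrixRing k) =
      specialMatrix k) :
    ∃ Q : MatrixRing, Q ≠ 0 ∧ ∀ (L : Type*) [Field L] [IsSepClosed L] [Algebra MatrixRing L],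
      algebraMap MatrixRing L Q ≠ 0 → Nat.card (IncidenceRing →ₐ[MatrixRing] L) = 18 := by
  have h2 : (2 : MatrixRing) ∉ RingHom.ker (algebraMap MatrixRing k) := by
    let _ : Algebra ℚ k := Algebra.compHom k (algebraMap ℚ MatrixRing)
    have : CharZero k := algebraRat.charZero k
    rw [RingHom.mem_ker, map_ofNat]
    exact two_ne_zero
  have hker (i j) : specialMatrix MatrixRing i j - Matrix.mvPolynomialX (Fin 6) (Fin 14) ℚ i j ∈
      RingHom.ker (algebraMap MatrixRing k) := by
    rw [RingHom.mem_ker, map_sub, sub_eq_zero, ← Matrix.map_apply (f := algebraMap MatrixRing k),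
      map_specialMatrix, ← hk, Matrix.map_apply]
  have := RingHom.ker_isPrime (algebraMap MatrixRing k)
  obtain ⟨s, hs, hspan⟩ := exists_span_away_pow_eq_top _ h2 hker
    (by rw [mvPolynomialX_map_algebraMap, incidenceMatrix_mulVec]) adjoin_range_incidencePoint
  have hsU := algebraMap_incidenceRing_ne_zero hk hs
  have : Module.Finite (Localization.Away s)
      (AlgebraLocalization (Submonoid.powers s) IncidenceRing) :=
    ⟨((Set.finite_range _).image _).toFinset, by rw [Set.Finite.coe_toFinset, hspan]⟩
  have : Module.IsTorsionFree MatrixRing IncidenceRing :=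
    Module.isTorsionFree_iff_algebraMap_injective.2 (algebraMap_incidenceRing_injective hsU)
  exact exists_forall_card_algHom_eq_of_span_away_pow_eq_top (ne_zero_of_map hsU) hspan
    (eighteen_le_natDegree_minpoly_away hk hs (Algebra.IsIntegral.isIntegral _))

lemma exists_forall_card_algHom_incidenceRing_eq :
    ∃ Q : MatrixRing, Q ≠ 0 ∧ ∀ (L : Type*) [Field L] [IsSepClosed L] [Algebra MatrixRing L],
      algebraMap MatrixRing L Q ≠ 0 → Nat.card (IncidenceRing →ₐ[MatrixRing] L) = 18 :=
  letI := evalAlgebra (specialMatrix ℚ)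
  exists_forall_card_algHom_incidenceRing_eq_of_specialMatrix
    (mvPolynomialX_map_evalAlgebra (specialMatrix ℚ))

theorem eighteen_conics_general :
    ∃ Q : MvPolynomial (Fin 6 × Fin 14) ℚ, Q ≠ 0 ∧
      ∀ (L : Type*) [Field L] [IsAlgClosed L] [Algebra ℚ L] (P : Matrix (Fin 6) (Fin 14) L),
        aeval (fun p : Fin 6 × Fin 14 => P p.1 p.2) Q ≠ 0 →
          ({z : Fin 6 → L |
              ∀ i : Fin 6, ∑ j : Fin 14, P i j * aeval z (conicF j) = 0}).Finite ∧
          ({z : Fin 6 → L |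
              ∀ i : Fin 6, ∑ j : Fin 14, P i j * aeval z (conicF j) = 0}).ncard = 18 := by
  obtain ⟨Q, hQ, hcount⟩ := exists_forall_card_algHom_incidenceRing_eq
  refine ⟨Q, hQ, fun L _ _ _ P hP => ?_⟩
  let _ := evalAlgebra P
  have hcard := hcount L hP
  rw [Nat.card_congr algHomIncidenceEquiv, mvPolynomialX_map_evalAlgebra] at hcard
  have hset : {z : Fin 6 → L | ∀ i, ∑ j, P i j * aeval z (conicF j) = 0} =
      {z | P *ᵥ conicEval z = 0} := by
    ext z
    simp [aeval_conicF, funext_iff, Matrix.mulVec, dotProduct]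
  have hncard : {z : Fin 6 → L | P *ᵥ conicEval z = 0}.ncard = 18 := hcard
  rw [hset]
  exact ⟨Set.finite_of_ncard_ne_zero (by simp [hncard]), hncard⟩

/-- There is a nonzero rational polynomial `Q` in the 84 entries of a
`6×14` matrix such that for every complex matrix `P` with `Q(P) ≠ 0`, the system
`P·F(a,b) = 0` of six equations in six unknowns has exactly 18 solutions in `ℂ⁶` (the count
of plane conics through the origin meeting six general lines in `ℂ³`). -/
theorem eighteen_conics :
    ∃ Q : MvPolynomial (Fin 6 × Fin 14) ℚ, Q ≠ 0 ∧
      ∀ P : Matrix (Fin 6) (Fin 14) ℂ,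
        aeval (fun p : Fin 6 × Fin 14 => P p.1 p.2) Q ≠ 0 →
          ({z : Fin 6 → ℂ |
              ∀ i : Fin 6, ∑ j : Fin 14, P i j * aeval z (conicF j) = 0}).Finite ∧
          ({z : Fin 6 → ℂ |
              ∀ i : Fin 6, ∑ j : Fin 14, P i j * aeval z (conicF j) = 0}).ncard = 18 := by
  obtain ⟨Q, hQ, hcount⟩ := eighteen_conics_general
  exact ⟨Q, hQ, hcount ℂ⟩
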